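/- Let φ be a non-trivial (non-affine) Bernstein function with φ(0) = 0 and φ(∞) = ∞, let Ψ be its inverse, let (μ_t)_{t>0} be the family of marginal laws of the subordinator associated with φ, let p ≥ 1, and assume x ↦ e^{−t x} Ψ(x)^p is integrable in a neighborhood of ∞ for all t > 0. Then the function t ↦ t²·E[ξ_t^{−p}] = t²·∫ x^{−p} μ_t(dx) is a Bernstein function if, and only if, (Ψ^p)' is concave on (0,∞). -/

import Mathlib

open MeasureTheory Set Filter

/-- A Bernstein function on `(0,∞)`: a nonnegative smooth function whose derivatives satisfy
`(−1)^{n−1} f^{(n)} ≥ 0` on `(0,∞)` for every `n ≥ 1`. -/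
def IsBernsteinFn (f : ℝ → ℝ) : Prop :=
  (∀ x : ℝ, 0 < x → 0 ≤ f x) ∧ ContDiffOn ℝ (⊤ : ℕ∞) f (Ioi 0) ∧
    ∀ n : ℕ, 1 ≤ n → ∀ x : ℝ, 0 < x → 0 ≤ (-1 : ℝ) ^ (n - 1) * iteratedDeriv n f x

open Topology

/-- The unnormalised gamma density `x ^ n * exp (-t x)`. -/
noncomputable def gammaKernel (n : ℕ) (t x : ℝ) : ℝ := x ^ n * Real.exp (-t * x)

/-- The first derivative in `x` of `gammaKernel n t`. -/
noncomputable def gammaKernelDeriv (n : ℕ) (t x : ℝ) : ℝ :=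
  (n * x ^ (n - 1) - t * x ^ n) * Real.exp (-t * x)

/-- The second derivative in `x` of `gammaKernel n t`. -/
noncomputable def gammaKernelDeriv₂ (n : ℕ) (t x : ℝ) : ℝ :=
  (t ^ 2 * x ^ n - 2 * n * t * x ^ (n - 1) + n * (n - 1) * x ^ (n - 2)) * Real.exp (-t * x)

lemma hasDerivAt_exp_neg_mul (t x : ℝ) :
    HasDerivAt (fun y => Real.exp (-t * y)) (-t * Real.exp (-t * x)) x := by
  have h := ((hasDerivAt_id x).const_mul (-t)).exp
  simpa [mul_comm] using h

lemma hasDerivAt_gammaKernel (n : ℕ) (t x : ℝ) :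
    HasDerivAt (gammaKernel n t) (gammaKernelDeriv n t x) x := by
  refine ((hasDerivAt_pow n x).mul (hasDerivAt_exp_neg_mul t x)).congr_deriv ?_
  simp only [gammaKernelDeriv]
  ring

lemma hasDerivAt_gammaKernelDeriv (n : ℕ) (t x : ℝ) :
    HasDerivAt (gammaKernelDeriv n t) (gammaKernelDeriv₂ n t x) x := by
  refine ((((hasDerivAt_pow (n - 1) x).const_mul (n : ℝ)).sub
    ((hasDerivAt_pow n x).const_mul t)).mul (hasDerivAt_exp_neg_mul t x)).congr_deriv ?_
  simp only [gammaKernelDeriv₂]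
  rcases n with _ | _ | n <;> simp <;> ring

lemma continuous_gammaKernel (n : ℕ) (t : ℝ) : Continuous (gammaKernel n t) := by
  unfold gammaKernel; fun_prop

lemma continuous_gammaKernelDeriv₂ (n : ℕ) (t : ℝ) : Continuous (gammaKernelDeriv₂ n t) := by
  unfold gammaKernelDeriv₂; fun_prop

/-- Integrating by parts twice against a gamma kernel on a compact subinterval of `(0,∞)`. -/
lemma integral_gammaKernelDeriv₂_mul_sub {g : ℝ → ℝ} (hg : ContDiffOn ℝ 2 g (Ioi 0))
    (n : ℕ) (t : ℝ) {a b : ℝ} (ha : 0 < a) (hab : a ≤ b) :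
    ∫ x in a..b, (gammaKernelDeriv₂ n t x * g x - gammaKernel n t x * deriv (deriv g) x) =
      (gammaKernelDeriv n t b * g b - gammaKernel n t b * deriv g b) -
      (gammaKernelDeriv n t a * g a - gammaKernel n t a * deriv g a) := by
  have h1 : ContDiffOn ℝ 1 (deriv g) (Ioi 0) :=
    ((contDiffOn_succ_iff_deriv_of_isOpen (n := 1) isOpen_Ioi).1 hg).2.2
  have h2 : ContinuousOn (deriv (deriv g)) (Ioi 0) :=
    h1.continuousOn_deriv_of_isOpen isOpen_Ioi le_rfl
  have hsub : uIcc a b ⊆ Ioi 0 := by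
    rw [uIcc_of_le hab]; exact fun x hx => ha.trans_le hx.1
  refine intervalIntegral.integral_eq_sub_of_hasDerivAt
    (f := fun x => gammaKernelDeriv n t x * g x - gammaKernel n t x * deriv g x) ?_ ?_
  · intro x hx
    have hx0 := hsub hx
    have hgx : HasDerivAt g (deriv g x) x :=
      ((hg.differentiableOn (by norm_num)).differentiableAt (Ioi_mem_nhds hx0)).hasDerivAt
    have hgx' : HasDerivAt (deriv g) (deriv (deriv g) x) x :=
      ((h1.differentiableOn (by norm_num)).differentiableAt (Ioi_mem_nhds hx0)).hasDerivAt
    refine (((hasDerivAt_gammaKernelDeriv n t x).mul hgx).sub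
      ((hasDerivAt_gammaKernel n t x).mul hgx')).congr_deriv ?_
    ring
  · apply ContinuousOn.intervalIntegrable
    exact (((continuous_gammaKernelDeriv₂ n t).continuousOn).mul (hg.continuousOn.mono hsub)).sub
      ((continuous_gammaKernel n t).continuousOn.mul (h2.mono hsub))

lemma gammaKernel_nonneg (n : ℕ) (t : ℝ) {x : ℝ} (hx : 0 ≤ x) : 0 ≤ gammaKernel n t x := by
  unfold gammaKernel; positivity

lemma gammaKernelDeriv_eq {n : ℕ} (hn : 1 ≤ n) (t x : ℝ) :
    gammaKernelDeriv n t x = (n - t * x) * (x ^ (n - 1) * Real.exp (-t * x)) := by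
  obtain ⟨k, rfl⟩ : ∃ k, n = k + 1 := ⟨n - 1, by omega⟩
  simp only [gammaKernelDeriv, Nat.add_sub_cancel]
  ring

lemma deriv_nonneg_of_monotoneOn_Ioi {g : ℝ → ℝ} (hmono : MonotoneOn g (Ioi 0)) {x : ℝ}
    (hx : 0 < x) : 0 ≤ deriv g x := by
  rw [← derivWithin_of_isOpen isOpen_Ioi hx]
  exact hmono.derivWithin_nonneg

/-- A monotone nonnegative concave differentiable function on `(0,∞)` has `x * deriv g x → 0` at `0+`. -/
lemma tendsto_mul_deriv_zero {g : ℝ → ℝ} (hd : DifferentiableOn ℝ g (Ioi 0))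
    (hpos : ∀ x, 0 < x → 0 ≤ g x) (hmono : MonotoneOn g (Ioi 0)) (hconc : ConcaveOn ℝ (Ioi 0) g) :
    Tendsto (fun x => x * deriv g x) (𝓝[>] 0) (𝓝 0) := by
  have hlim : Tendsto g (𝓝[>] 0) (𝓝 (sInf (g '' Ioi 0))) :=
    hmono.tendsto_nhdsGT ⟨0, by rintro _ ⟨x, hx, rfl⟩; exact hpos x hx⟩
  have hhalf : Tendsto (fun x : ℝ => x / 2) (𝓝[>] 0) (𝓝[>] 0) := by
    refine tendsto_nhdsWithin_iff.2 ⟨?_, ?_⟩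
    · have : Tendsto (fun x : ℝ => x / 2) (𝓝 0) (𝓝 (0 / 2)) := tendsto_id.div_const 2
      rw [zero_div] at this
      exact this.mono_left nhdsWithin_le_nhds
    · filter_upwards [self_mem_nhdsWithin] with x hx
      exact half_pos (mem_Ioi.1 hx)
  have hdiff : Tendsto (fun x => 2 * (g x - g (x / 2))) (𝓝[>] 0) (𝓝 0) := by
    simpa using ((hlim.sub (hlim.comp hhalf)).const_mul 2)
  refine tendsto_of_tendsto_of_tendsto_of_le_of_le' tendsto_const_nhds hdiff ?_ ?_
  · filter_upwards [self_mem_nhdsWithin] with x hx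
    exact mul_nonneg (le_of_lt hx) (deriv_nonneg_of_monotoneOn_Ioi hmono hx)
  · filter_upwards [self_mem_nhdsWithin] with x (hx : 0 < x)
    have h := hconc.deriv_le_slope (x := x / 2) (y := x) (half_pos hx) hx (half_lt_self hx)
      (hd.differentiableAt (Ioi_mem_nhds hx))
    rw [slope_def_field, le_div_iff₀ (by linarith)] at h
    linarith

/-- Concave monotone densities have nonpositive pairing with second derivatives of gamma kernels. -/
lemma integral_gammaKernelDeriv₂_mul_nonpos {g : ℝ → ℝ} (hg : ContDiffOn ℝ 2 g (Ioi 0))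
    (hpos : ∀ x, 0 < x → 0 ≤ g x) (hmono : MonotoneOn g (Ioi 0)) (hconc : ConcaveOn ℝ (Ioi 0) g)
    {n : ℕ} (hn : 1 ≤ n) {t : ℝ} (ht : 0 < t)
    (hint : IntegrableOn (fun x => gammaKernelDeriv₂ n t x * g x) (Ioi 0)) :
    ∫ x in Ioi 0, gammaKernelDeriv₂ n t x * g x ≤ 0 := by
  have hd : DifferentiableOn ℝ g (Ioi 0) := hg.differentiableOn (by norm_num)
  have h1 : ContDiffOn ℝ 1 (deriv g) (Ioi 0) :=
    ((contDiffOn_succ_iff_deriv_of_isOpen (n := 1) isOpen_Ioi).1 hg).2.2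
  have hc2 : ContinuousOn (deriv (deriv g)) (Ioi 0) :=
    h1.continuousOn_deriv_of_isOpen isOpen_Ioi le_rfl
  have h2 : ∀ x, 0 < x → deriv (deriv g) x ≤ 0 := by
    intro x hx
    rw [← derivWithin_of_isOpen isOpen_Ioi hx]
    exact (hconc.antitoneOn_deriv fun y hy => hd.differentiableAt
      (Ioi_mem_nhds hy)).derivWithin_nonpos
  have hpow : ∀ {x : ℝ}, 0 < x → 0 ≤ x ^ (n - 1) * Real.exp (-t * x) := fun hx => by positivity
  have htail : ∀ ε, 0 < ε → ε < n / t → ε < 1 →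
      ∫ x in Ioi ε, gammaKernelDeriv₂ n t x * g x ≤ ε * deriv g ε := by
    intro ε hε hεt hε1
    refine le_of_tendsto (intervalIntegral_tendsto_integral_Ioi ε
      (hint.mono_set (Ioi_subset_Ioi hε.le)) tendsto_id) ?_
    filter_upwards [eventually_ge_atTop (n / t)] with R hR
    have hεR : ε ≤ R := hεt.le.trans hR
    have hR0 : 0 < R := hε.trans_le hεR
    have hsub : uIcc ε R ⊆ Ioi 0 := by
      rw [uIcc_of_le hεR]; exact fun x hx => hε.trans_le hx.1
    have hle : ∫ x in ε..R, gammaKernelDeriv₂ n t x * g x ≤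
        ∫ x in ε..R, (gammaKernelDeriv₂ n t x * g x - gammaKernel n t x * deriv (deriv g) x) := by
      refine intervalIntegral.integral_mono_on hεR ?_ ?_ ?_
      · exact (((continuous_gammaKernelDeriv₂ n t).continuousOn).mul
          (hg.continuousOn.mono hsub)).intervalIntegrable
      · exact ((((continuous_gammaKernelDeriv₂ n t).continuousOn).mul
          (hg.continuousOn.mono hsub)).sub ((continuous_gammaKernel n t).continuousOn.mul
          (hc2.mono hsub))).intervalIntegrable
      · intro x hx
        have hx0 := hε.trans_le hx.1
        have := mul_nonpos_of_nonneg_of_nonpos (gammaKernel_nonneg n t hx0.le) (h2 x hx0)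
        linarith
    rw [integral_gammaKernelDeriv₂_mul_sub hg n t hε hεR] at hle
    have e1 : gammaKernelDeriv n t R * g R ≤ 0 := by
      rw [gammaKernelDeriv_eq hn]
      refine mul_nonpos_of_nonpos_of_nonneg (mul_nonpos_of_nonpos_of_nonneg ?_ (hpow hR0))
        (hpos R hR0)
      have := (div_le_iff₀ ht).1 hR
      linarith
    have e2 : 0 ≤ gammaKernel n t R * deriv g R :=
      mul_nonneg (gammaKernel_nonneg n t hR0.le) (deriv_nonneg_of_monotoneOn_Ioi hmono hR0)
    have e3 : 0 ≤ gammaKernelDeriv n t ε * g ε := by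
      rw [gammaKernelDeriv_eq hn]
      refine mul_nonneg (mul_nonneg ?_ (hpow hε)) (hpos ε hε)
      have := (lt_div_iff₀ ht).1 hεt
      linarith
    have e4 : gammaKernel n t ε * deriv g ε ≤ ε * deriv g ε := by
      refine mul_le_mul_of_nonneg_right ?_ (deriv_nonneg_of_monotoneOn_Ioi hmono hε)
      have hx : Real.exp (-t * ε) ≤ 1 := Real.exp_le_one_iff.2 (by nlinarith)
      have hy : ε ^ n ≤ ε := pow_le_of_le_one hε.le hε1.le (by omega)
      calc gammaKernel n t ε ≤ ε * 1 := mul_le_mul hy hx (Real.exp_pos _).le hε.le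
        _ = ε := mul_one ε
    simp only [id]
    linarith
  have hcov : AECover (volume.restrict (Ioi (0 : ℝ))) (𝓝[>] (0 : ℝ)) fun ε => Ioi ε :=
    aecover_Ioi_of_Ioi (tendsto_id.mono_left nhdsWithin_le_nhds)
  have hlim := hcov.integral_tendsto_of_countably_generated hint
  refine le_of_tendsto_of_tendsto hlim (tendsto_mul_deriv_zero hd hpos hmono hconc) ?_
  have hnt : (0 : ℝ) < n / t := div_pos (by exact_mod_cast hn) ht
  filter_upwards [Ioo_mem_nhdsGT (lt_min hnt one_pos)] with ε hε
  have hlt := lt_min_iff.1 hε.2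
  rw [Measure.restrict_restrict measurableSet_Ioi,
    inter_eq_left.2 (Ioi_subset_Ioi hε.1.le)]
  exact htail ε hε.1 hlt.1 hlt.2

lemma gammaKernel_eq_pow (n : ℕ) (s x : ℝ) :
    gammaKernel n (n * s) x = (x * Real.exp (-s * x)) ^ n := by
  rw [gammaKernel, mul_pow, ← Real.exp_nat_mul]
  ring_nf

lemma hasDerivAt_mul_exp_neg_mul (s x : ℝ) :
    HasDerivAt (fun y => y * Real.exp (-s * y)) ((1 - s * x) * Real.exp (-s * x)) x := by
  refine ((hasDerivAt_id x).mul (hasDerivAt_exp_neg_mul s x)).congr_deriv ?_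
  simp only [id]
  ring

lemma strictMonoOn_mul_exp_neg_mul {s : ℝ} (hs : 0 < s) :
    StrictMonoOn (fun y => y * Real.exp (-s * y)) (Iic s⁻¹) := by
  refine strictMonoOn_of_deriv_pos (convex_Iic _) (by fun_prop) fun x hx => ?_
  rw [interior_Iic] at hx
  rw [(hasDerivAt_mul_exp_neg_mul s x).deriv]
  have : s * x < 1 := by
    have := mul_lt_mul_of_pos_left (mem_Iio.1 hx) hs
    rwa [mul_inv_cancel₀ hs.ne'] at this
  exact mul_pos (by linarith) (Real.exp_pos _)

lemma strictAntiOn_mul_exp_neg_mul {s : ℝ} (hs : 0 < s) :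
    StrictAntiOn (fun y => y * Real.exp (-s * y)) (Ici s⁻¹) := by
  refine strictAntiOn_of_deriv_neg (convex_Ici _) (by fun_prop) fun x hx => ?_
  rw [interior_Ici] at hx
  rw [(hasDerivAt_mul_exp_neg_mul s x).deriv]
  have : 1 < s * x := by
    have := mul_lt_mul_of_pos_left (mem_Ioi.1 hx) hs
    rwa [mul_inv_cancel₀ hs.ne'] at this
  exact mul_neg_of_neg_of_pos (by linarith) (Real.exp_pos _)

lemma abs_gammaKernelDeriv₂_le {n : ℕ} (hn : 2 ≤ n) {s m x : ℝ} (hs : 0 < s) (hx : 0 < x)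
    (hm : x * Real.exp (-s * x) ≤ m) :
    |gammaKernelDeriv₂ n (n * s) x| ≤
      n ^ 2 * m ^ (n - 2) * ((s * x + 1) ^ 2 * Real.exp (-(2 * s) * x)) := by
  obtain ⟨k, rfl⟩ : ∃ k, n = k + 2 := ⟨n - 2, by omega⟩
  have hexp : Real.exp (-(((k + 2 : ℕ) : ℝ) * s) * x) =
      Real.exp (-s * x) ^ k * Real.exp (-(2 * s) * x) := by
    rw [← Real.exp_nat_mul, ← Real.exp_add]
    push_cast
    ring_nf
  have heq : gammaKernelDeriv₂ (k + 2) (((k + 2 : ℕ) : ℝ) * s) x =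
      ((k + 2 : ℝ) ^ 2 * (s * x - 1) ^ 2 - (k + 2)) *
        ((x * Real.exp (-s * x)) ^ k * Real.exp (-(2 * s) * x)) := by
    rw [gammaKernelDeriv₂, hexp]
    simp only [Nat.add_sub_cancel, show k + 2 - 1 = k + 1 by omega]
    push_cast
    ring
  have hsx : 0 < s * x := mul_pos hs hx
  have hk : (0 : ℝ) ≤ k := Nat.cast_nonneg k
  have hcoef : |(k + 2 : ℝ) ^ 2 * (s * x - 1) ^ 2 - (k + 2)| ≤
      (k + 2 : ℝ) ^ 2 * (s * x + 1) ^ 2 := by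
    have h1 : (k + 2 : ℝ) ^ 2 * (s * x - 1) ^ 2 ≤ (k + 2 : ℝ) ^ 2 * (s * x + 1) ^ 2 := by
      gcongr ?_ * ?_
      nlinarith
    have h2 : (k + 2 : ℝ) ^ 2 * 1 ≤ (k + 2 : ℝ) ^ 2 * (s * x + 1) ^ 2 := by
      gcongr
      nlinarith
    have h3 : 0 ≤ (k + 2 : ℝ) ^ 2 * (s * x - 1) ^ 2 := by positivity
    rw [abs_le]
    constructor <;> nlinarith
  have hpow : (x * Real.exp (-s * x)) ^ k ≤ m ^ k :=
    pow_le_pow_left₀ (by positivity) hm k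
  rw [heq, abs_mul, abs_of_nonneg (by positivity : 0 ≤ (x * Real.exp (-s * x)) ^ k *
    Real.exp (-(2 * s) * x))]
  calc _ ≤ ((k + 2 : ℝ) ^ 2 * (s * x + 1) ^ 2) * (m ^ k * Real.exp (-(2 * s) * x)) := by
        gcongr
    _ = _ := by simp only [Nat.add_sub_cancel]; push_cast; ring

lemma abs_gammaKernel_boundary_le {n : ℕ} (hn : 1 ≤ n) {s m x u v : ℝ} (hx : 0 < x)
    (hm : x * Real.exp (-s * x) ≤ m) :
    |gammaKernelDeriv n (n * s) x * u - gammaKernel n (n * s) x * v| ≤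
      n ^ 2 * m ^ n * (|x⁻¹ - s| * |u| + |v|) := by
  have hq : 0 ≤ x * Real.exp (-s * x) := by positivity
  have hpow : (x * Real.exp (-s * x)) ^ n ≤ m ^ n := pow_le_pow_left₀ hq hm n
  have hder : gammaKernelDeriv n (n * s) x = n * (x⁻¹ - s) * (x * Real.exp (-s * x)) ^ n := by
    rw [← gammaKernel_eq_pow, gammaKernelDeriv_eq hn, gammaKernel]
    obtain ⟨k, rfl⟩ : ∃ k, n = k + 1 := ⟨n - 1, by omega⟩
    simp only [Nat.add_sub_cancel]
    field_simp
    ring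
  have hn1 : (1 : ℝ) ≤ n := by exact_mod_cast hn
  have hnn : (n : ℝ) ≤ n ^ 2 := by nlinarith
  have hn2 : (1 : ℝ) ≤ n ^ 2 := by nlinarith
  rw [hder, gammaKernel_eq_pow]
  have hm0 : 0 ≤ m ^ n := (pow_nonneg hq n).trans hpow
  calc _ ≤ |n * (x⁻¹ - s) * (x * Real.exp (-s * x)) ^ n * u| +
        |(x * Real.exp (-s * x)) ^ n * v| := abs_sub _ _
    _ = n * (x * Real.exp (-s * x)) ^ n * (|x⁻¹ - s| * |u|) +
        1 * (x * Real.exp (-s * x)) ^ n * |v| := by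
      simp only [abs_mul, abs_of_nonneg (pow_nonneg hq n), Nat.abs_cast]; ring
    _ ≤ n ^ 2 * m ^ n * (|x⁻¹ - s| * |u|) + n ^ 2 * m ^ n * |v| := by gcongr
    _ = _ := by ring

/-- Localisation of the gamma kernels at their mode: nonpositive pairings with their second
derivatives force concavity. -/
lemma concaveOn_of_integral_gammaKernelDeriv₂_mul_nonpos {g : ℝ → ℝ}
    (hg : ContDiffOn ℝ 2 g (Ioi 0))
    (hint : ∀ (n : ℕ) (t : ℝ), 0 < t → IntegrableOn (fun x => gammaKernel n t x * g x) (Ioi 0))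
    (hint₂ : ∀ (n : ℕ) (t : ℝ), 0 < t →
      IntegrableOn (fun x => gammaKernelDeriv₂ n t x * g x) (Ioi 0))
    (hle : ∀ (n : ℕ) (t : ℝ), 1 ≤ n → 0 < t →
      ∫ x in Ioi 0, gammaKernelDeriv₂ n t x * g x ≤ 0) :
    ConcaveOn ℝ (Ioi 0) g := by
  have hd : DifferentiableOn ℝ g (Ioi 0) := hg.differentiableOn (by norm_num)
  have h1 : ContDiffOn ℝ 1 (deriv g) (Ioi 0) :=
    ((contDiffOn_succ_iff_deriv_of_isOpen (n := 1) isOpen_Ioi).1 hg).2.2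
  have hc2 : ContinuousOn (deriv (deriv g)) (Ioi 0) :=
    h1.continuousOn_deriv_of_isOpen isOpen_Ioi le_rfl
  refine concaveOn_of_deriv2_nonpos (convex_Ioi 0) hd.continuousOn (by rwa [interior_Ioi])
    (by rw [interior_Ioi]; exact h1.differentiableOn (by norm_num)) ?_
  rw [interior_Ioi]
  intro x₀ (hx₀ : 0 < x₀)
  by_contra! hpos
  replace hpos : 0 < deriv (deriv g) x₀ := hpos
  set c := deriv (deriv g) x₀ / 2 with hc
  have hc0 : 0 < c := by positivity
  -- an interval around `x₀` on which the second derivative stays above `c`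
  obtain ⟨a, b, ha, hax, hxb, hcab⟩ : ∃ a b, 0 < a ∧ a < x₀ ∧ x₀ < b ∧
      ∀ x ∈ Icc a b, c ≤ deriv (deriv g) x := by
    have hnear : ∀ᶠ x in 𝓝 x₀, c < deriv (deriv g) x :=
      (hc2.continuousAt (Ioi_mem_nhds hx₀)).eventually_const_lt (by linarith)
    obtain ⟨δ, hδ, hball⟩ := Metric.eventually_nhds_iff.1 hnear
    refine ⟨max (x₀ / 2) (x₀ - δ / 2), x₀ + δ / 2, ?_, ?_, ?_, fun x hx => (hball ?_).le⟩
    · exact lt_max_of_lt_left (by positivity)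
    · exact max_lt (by linarith) (by linarith)
    · linarith
    · have := (le_max_right _ _).trans hx.1
      rw [Real.dist_eq, abs_lt]
      constructor <;> linarith [hx.2]
  have hab : a < b := hax.trans hxb
  set s := x₀⁻¹ with hs_def
  have hs : 0 < s := inv_pos.2 hx₀
  have hsinv : s⁻¹ = x₀ := inv_inv x₀
  set q : ℝ → ℝ := fun y => y * Real.exp (-s * y) with hq
  have hup := strictMonoOn_mul_exp_neg_mul hs
  have hdown := strictAntiOn_mul_exp_neg_mul hs
  rw [hsinv] at hup hdown
  set m := max (q a) (q b) with hm
  have hm0 : 0 < m := lt_max_of_lt_left (mul_pos ha (Real.exp_pos _))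
  have hmq : m < q x₀ := max_lt (hup hax.le self_mem_Iic hax) (hdown self_mem_Ici hxb.le hxb)
  have htail : ∀ x, 0 < x → x ∉ Ioc a b → q x ≤ m := by
    intro x hx hxab
    by_cases hxa : x ≤ a
    · exact (hup.monotoneOn (hxa.trans hax.le) hax.le hxa).trans (le_max_left _ _)
    · have hbx : b ≤ x := by
        by_contra! h
        exact hxab ⟨not_le.1 hxa, h.le⟩
      exact (hdown.antitoneOn hxb.le (hxb.le.trans hbx) hbx).trans (le_max_right _ _)
  obtain ⟨r, hmr, hrq⟩ := exists_between hmq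
  -- a subinterval around `x₀` on which `q` exceeds `r`
  obtain ⟨b', hxb', hb'b, hrb⟩ : ∃ b', x₀ < b' ∧ b' ≤ b ∧ ∀ x ∈ Ioc x₀ b', r ≤ q x := by
    have hqc : Continuous q := by rw [hq]; fun_prop
    obtain ⟨δ, hδ, hball⟩ := Metric.eventually_nhds_iff.1
      (hqc.continuousAt.eventually_const_lt hrq)
    refine ⟨min b (x₀ + δ / 2), lt_min hxb (by linarith), min_le_left _ _, fun x hx => (hball ?_).le⟩
    have := hx.2.trans (min_le_right _ _)
    rw [Real.dist_eq, abs_lt]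
    constructor <;> linarith [hx.1]
  have hr0 : 0 < r := hm0.trans hmr
  -- the integrable majorant for the tails
  set J := ∫ x in Ioi 0, (s * x + 1) ^ 2 * Real.exp (-(2 * s) * x) * |g x| with hJ
  have hJint : IntegrableOn (fun x => (s * x + 1) ^ 2 * Real.exp (-(2 * s) * x) * |g x|)
      (Ioi 0) := by
    have hcomb := (((hint 2 (2 * s) (by positivity)).const_mul (s ^ 2)).add
      ((hint 1 (2 * s) (by positivity)).const_mul (2 * s))).add (hint 0 (2 * s) (by positivity))
    refine hcomb.norm.congr (Eventually.of_forall fun x => ?_)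
    have : s ^ 2 * (gammaKernel 2 (2 * s) x * g x) + 2 * s * (gammaKernel 1 (2 * s) x * g x) +
        gammaKernel 0 (2 * s) x * g x = (s * x + 1) ^ 2 * Real.exp (-(2 * s) * x) * g x := by
      simp only [gammaKernel]; ring
    simp only [Pi.add_apply, this, Real.norm_eq_abs, abs_mul, Real.abs_exp, abs_pow, sq_abs]
  set K := |a⁻¹ - s| * |g a| + |deriv g a| + (|b⁻¹ - s| * |g b| + |deriv g b|) with hK
  have hsub : Icc a b ⊆ Ioi 0 := fun x hx => ha.trans_le hx.1
  have hsub' : uIcc a b ⊆ Ioi 0 := by rwa [uIcc_of_le hab.le]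
  have key : ∀ n : ℕ, 2 ≤ n → c * (b' - x₀) * r ^ n ≤ n ^ 2 * m ^ n * (J / m ^ 2 + K) := by
    intro n hn
    have hn1 : 1 ≤ n := by omega
    have hns : 0 < (n : ℝ) * s := mul_pos (by exact_mod_cast hn1) hs
    have hsplit : (∫ x in Ioc a b, gammaKernelDeriv₂ n (n * s) x * g x) +
        ∫ x in Ioi 0 \ Ioc a b, gammaKernelDeriv₂ n (n * s) x * g x =
        ∫ x in Ioi 0, gammaKernelDeriv₂ n (n * s) x * g x := by
      have := integral_inter_add_sdiff (s := Ioi 0) measurableSet_Ioc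
        (hint₂ n (n * s) hns) (t := Ioc a b)
      rwa [inter_eq_right.2 (Ioc_subset_Icc_self.trans hsub)] at this
    have houter : -(n ^ 2 * m ^ (n - 2) * J) ≤
        ∫ x in Ioi 0 \ Ioc a b, gammaKernelDeriv₂ n (n * s) x * g x := by
      refine neg_le_of_abs_le ((abs_integral_le_integral_abs).trans ?_)
      calc _ ≤ ∫ x in Ioi 0 \ Ioc a b, n ^ 2 * m ^ (n - 2) *
            ((s * x + 1) ^ 2 * Real.exp (-(2 * s) * x) * |g x|) := by
            refine setIntegral_mono_on ((hint₂ n (n * s) hns).mono_set sdiff_subset).abs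
              ((hJint.mono_set sdiff_subset).const_mul _)
              (measurableSet_Ioi.diff measurableSet_Ioc) fun x hx => ?_
            rw [abs_mul]
            refine (mul_le_mul_of_nonneg_right (abs_gammaKernelDeriv₂_le hn hs hx.1
              (htail x hx.1 hx.2)) (abs_nonneg _)).trans_eq ?_
            ring
        _ = n ^ 2 * m ^ (n - 2) * ∫ x in Ioi 0 \ Ioc a b,
            (s * x + 1) ^ 2 * Real.exp (-(2 * s) * x) * |g x| := integral_const_mul _ _
        _ ≤ n ^ 2 * m ^ (n - 2) * J := by
            refine mul_le_mul_of_nonneg_left ?_ (by positivity)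
            exact setIntegral_mono_set hJint (Eventually.of_forall fun x => by positivity)
              (Eventually.of_forall sdiff_subset)
    have hparts := integral_gammaKernelDeriv₂_mul_sub hg n (n * s) ha hab.le
    have hi1 : IntervalIntegrable (fun x => gammaKernelDeriv₂ n (n * s) x * g x) volume a b :=
      ((continuous_gammaKernelDeriv₂ n _).continuousOn.mul
        (hg.continuousOn.mono hsub')).intervalIntegrable
    have hi2 : IntervalIntegrable (fun x => gammaKernel n (n * s) x * deriv (deriv g) x)
        volume a b := ((continuous_gammaKernel n _).continuousOn.mul
        (hc2.mono hsub')).intervalIntegrable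
    rw [intervalIntegral.integral_sub hi1 hi2, intervalIntegral.integral_of_le hab.le,
      intervalIntegral.integral_of_le hab.le] at hparts
    have hBa := neg_le_of_abs_le ((abs_neg _).trans_le (abs_gammaKernel_boundary_le hn1 ha
      (le_max_left (q a) (q b)) (u := g a) (v := deriv g a)))
    have hBb := neg_le_of_abs_le (abs_gammaKernel_boundary_le hn1 (hx₀.trans hxb)
      (le_max_right (q a) (q b)) (u := g b) (v := deriv g b))
    have hmain : c * (b' - x₀) * r ^ n ≤
        ∫ x in Ioc a b, gammaKernel n (n * s) x * deriv (deriv g) x := by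
      have hI : IntegrableOn (fun x => gammaKernel n (n * s) x * deriv (deriv g) x)
          (Ioc a b) := (intervalIntegrable_iff_integrableOn_Ioc_of_le hab.le).1 hi2
      have hss : Ioc x₀ b' ⊆ Ioc a b := Ioc_subset_Ioc hax.le hb'b
      calc c * (b' - x₀) * r ^ n = ∫ _ in Ioc x₀ b', r ^ n * c := by
            rw [setIntegral_const, smul_eq_mul, Real.volume_real_Ioc_of_le hxb'.le]
            ring
        _ ≤ ∫ x in Ioc x₀ b', gammaKernel n (n * s) x * deriv (deriv g) x := by
            refine setIntegral_mono_on (integrableOn_const (by simp)) (hI.mono_set hss) measurableSet_Ioc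
              fun x hx => ?_
            rw [gammaKernel_eq_pow]
            exact mul_le_mul (pow_le_pow_left₀ hr0.le (hrb x hx) n)
              (hcab x (Ioc_subset_Icc_self (hss hx))) hc0.le
              (pow_nonneg (hr0.le.trans (hrb x hx)) n)
        _ ≤ _ := by
            refine setIntegral_mono_set hI ?_ (Eventually.of_forall hss)
            refine (ae_restrict_iff' measurableSet_Ioc).2 (Eventually.of_forall fun x hx => ?_)
            exact mul_nonneg (gammaKernel_nonneg _ _ (ha.trans hx.1).le)
              (hc0.le.trans (hcab x (Ioc_subset_Icc_self hx)))
    have hnonpos := hle n (n * s) hn1 hns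
    have hmn : m ^ (n - 2) * J = m ^ n * (J / m ^ 2) := by
      obtain ⟨k, rfl⟩ : ∃ k, n = k + 2 := ⟨n - 2, by omega⟩
      rw [Nat.add_sub_cancel, pow_add]
      field_simp
    have : (n : ℝ) ^ 2 * m ^ n * (J / m ^ 2 + K) = n ^ 2 * m ^ (n - 2) * J +
        n ^ 2 * m ^ n * (|a⁻¹ - s| * |g a| + |deriv g a|) +
        n ^ 2 * m ^ n * (|b⁻¹ - s| * |g b| + |deriv g b|) := by
      rw [mul_assoc _ (m ^ (n - 2)) J, hmn, hK]; ring
    linarith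
  have hlim : Tendsto (fun n : ℕ => (n : ℝ) ^ 2 * (m / r) ^ n * (J / m ^ 2 + K)) atTop (𝓝 0) := by
    have := (tendsto_pow_const_mul_const_pow_of_abs_lt_one 2 (r := m / r)
      (by rw [abs_of_pos (div_pos hm0 hr0)]; exact (div_lt_one hr0).2 hmr)).mul_const
      (J / m ^ 2 + K)
    simpa using this
  have hcontra : c * (b' - x₀) ≤ 0 := by
    refine ge_of_tendsto hlim ?_
    filter_upwards [eventually_ge_atTop 2] with n hn
    have hrn : 0 < r ^ n := pow_pos hr0 n
    have := (le_div_iff₀ hrn).2 (key n hn)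
    rw [div_pow]
    refine this.trans_eq ?_
    ring
  exact absurd hcontra (not_le.2 (mul_pos hc0 (sub_pos.2 hxb')))

/-- The measure with density `g` on `(0,∞)`. -/
noncomputable def densityMeasure (g : ℝ → ℝ) : Measure ℝ :=
  (volume.restrict (Ioi 0)).withDensity fun x => (g x).toNNReal

lemma integrable_densityMeasure_iff {g : ℝ → ℝ} (hg : ContinuousOn g (Ioi 0))
    (hpos : ∀ x, 0 < x → 0 ≤ g x) (f : ℝ → ℝ) :
    Integrable f (densityMeasure g) ↔ IntegrableOn (fun x => f x * g x) (Ioi 0) := by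
  have hm : AEMeasurable (fun x => (g x).toNNReal) (volume.restrict (Ioi 0)) :=
    (hg.aemeasurable measurableSet_Ioi).real_toNNReal
  rw [densityMeasure, integrable_withDensity_iff_integrable_coe_smul₀ hm]
  refine integrable_congr ((ae_restrict_iff' measurableSet_Ioi).2
    (Eventually.of_forall fun x hx => ?_))
  simp [Real.coe_toNNReal _ (hpos x hx), mul_comm]

lemma integral_densityMeasure {g : ℝ → ℝ} (hg : ContinuousOn g (Ioi 0))
    (hpos : ∀ x, 0 < x → 0 ≤ g x) (f : ℝ → ℝ) :
    ∫ x, f x ∂(densityMeasure g) = ∫ x in Ioi 0, f x * g x := by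
  have hm : AEMeasurable (fun x => (g x).toNNReal) (volume.restrict (Ioi 0)) :=
    (hg.aemeasurable measurableSet_Ioi).real_toNNReal
  rw [densityMeasure, integral_withDensity_eq_integral_smul₀ hm]
  refine setIntegral_congr_fun measurableSet_Ioi fun x hx => ?_
  simp [NNReal.smul_def, Real.coe_toNNReal _ (hpos x hx), mul_comm]

section Laplace

variable {g : ℝ → ℝ} (hg : ContinuousOn g (Ioi 0)) (hpos : ∀ x, 0 < x → 0 ≤ g x)
  (hint : ∀ t : ℝ, 0 < t → IntegrableOn (fun x => Real.exp (-t * x) * g x) (Ioi 0))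

include hg hpos hint

lemma mem_interior_integrableExpSet_densityMeasure {t : ℝ} (ht : 0 < t) :
    t ∈ interior (ProbabilityTheory.integrableExpSet (fun x => -x) (densityMeasure g)) := by
  refine mem_interior.2 ⟨Ioi 0, fun s hs => ?_, isOpen_Ioi, ht⟩
  refine (integrable_densityMeasure_iff hg hpos _).2 ?_
  simpa using hint s hs

lemma integrableOn_gammaKernel_mul (n : ℕ) {t : ℝ} (ht : 0 < t) :
    IntegrableOn (fun x => gammaKernel n t x * g x) (Ioi 0) := by
  have h := ((integrable_densityMeasure_iff hg hpos _).1
    (ProbabilityTheory.integrable_pow_mul_exp_of_mem_interior_integrableExpSet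
      (mem_interior_integrableExpSet_densityMeasure hg hpos hint ht) n)).const_mul ((-1) ^ n)
  refine h.congr (Eventually.of_forall fun x => ?_)
  simp only [gammaKernel]
  rw [neg_pow x, ← mul_assoc, ← mul_assoc, ← mul_assoc, ← mul_pow]
  simp

lemma integrableOn_gammaKernelDeriv₂_mul (n : ℕ) {t : ℝ} (ht : 0 < t) :
    IntegrableOn (fun x => gammaKernelDeriv₂ n t x * g x) (Ioi 0) := by
  have h := (((integrableOn_gammaKernel_mul hg hpos hint n ht).const_mul (t ^ 2)).sub
    ((integrableOn_gammaKernel_mul hg hpos hint (n - 1) ht).const_mul (2 * n * t))).add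
    ((integrableOn_gammaKernel_mul hg hpos hint (n - 2) ht).const_mul (n * (n - 1)))
  refine h.congr (Eventually.of_forall fun x => ?_)
  simp only [gammaKernel, gammaKernelDeriv₂, Pi.add_apply, Pi.sub_apply]
  ring

lemma integral_gammaKernelDeriv₂_mul_eq (n : ℕ) {t : ℝ} (ht : 0 < t) :
    ∫ x in Ioi 0, gammaKernelDeriv₂ n t x * g x =
      t ^ 2 * (∫ x in Ioi 0, gammaKernel n t x * g x) -
      2 * n * t * (∫ x in Ioi 0, gammaKernel (n - 1) t x * g x) +
      n * (n - 1) * (∫ x in Ioi 0, gammaKernel (n - 2) t x * g x) := by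
  have i0 := (integrableOn_gammaKernel_mul hg hpos hint n ht).const_mul (t ^ 2)
  have i1 := (integrableOn_gammaKernel_mul hg hpos hint (n - 1) ht).const_mul (2 * n * t)
  have i2 := (integrableOn_gammaKernel_mul hg hpos hint (n - 2) ht).const_mul
    ((n : ℝ) * (n - 1))
  have i01 : Integrable (fun x => t ^ 2 * (gammaKernel n t x * g x) -
      2 * n * t * (gammaKernel (n - 1) t x * g x)) (volume.restrict (Ioi 0)) := i0.sub i1
  rw [← integral_const_mul, ← integral_const_mul, ← integral_const_mul, ← integral_sub i0 i1,
    ← integral_add i01 i2]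
  refine integral_congr_ae (Eventually.of_forall fun x => ?_)
  simp only [gammaKernel, gammaKernelDeriv₂]
  ring

lemma hasDerivAt_integral_gammaKernel_mul (n : ℕ) {t : ℝ} (ht : 0 < t) :
    HasDerivAt (fun t => ∫ x in Ioi 0, gammaKernel n t x * g x)
      (-∫ x in Ioi 0, gammaKernel (n + 1) t x * g x) t := by
  have h := (ProbabilityTheory.hasDerivAt_integral_pow_mul_exp_real
    (mem_interior_integrableExpSet_densityMeasure hg hpos hint ht) n).const_mul ((-1) ^ n)
  simp only [integral_densityMeasure hg hpos, ← integral_const_mul] at h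
  have hone : ((-1 : ℝ) ^ n) * (-1) ^ n = 1 := by rw [← mul_pow]; simp
  refine (h.congr_of_eventuallyEq (Eventually.of_forall fun s => ?_)).congr_deriv ?_
  · refine integral_congr_ae (Eventually.of_forall fun x => ?_)
    simp only [gammaKernel, neg_pow x]
    rw [show s * -x = -s * x by ring]
    linear_combination -x ^ n * Real.exp (-s * x) * g x * hone
  · rw [← integral_neg]
    refine integral_congr_ae (Eventually.of_forall fun x => ?_)
    simp only [gammaKernel, neg_pow x, pow_succ]
    rw [show t * -x = -t * x by ring]
    linear_combination -x ^ n * x * Real.exp (-t * x) * g x * hone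

lemma contDiffOn_integral_exp_mul :
    ContDiffOn ℝ (⊤ : ℕ∞) (fun t => ∫ x in Ioi 0, Real.exp (-t * x) * g x) (Ioi 0) := by
  intro t ht
  have h := (ProbabilityTheory.analyticAt_mgf
    (mem_interior_integrableExpSet_densityMeasure hg hpos hint ht)).contDiffAt (n := (⊤ : ℕ∞))
  refine (h.congr_of_eventuallyEq (Eventually.of_forall fun s => ?_)).contDiffWithinAt
  simp [ProbabilityTheory.mgf, integral_densityMeasure hg hpos]

/-- All derivatives of `t ↦ t² ∫ e^{-tx} g(x) dx`. -/
lemma iteratedDeriv_sq_mul_integral_exp_mul (c : ℝ) (n : ℕ) :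
    EqOn (iteratedDeriv n fun t => c * (t ^ 2 * ∫ x in Ioi 0, Real.exp (-t * x) * g x))
      (fun t => c * ((-1) ^ n * ∫ x in Ioi 0, gammaKernelDeriv₂ n t x * g x)) (Ioi 0) := by
  induction n with
  | zero =>
    intro t ht
    simp only [iteratedDeriv_zero, gammaKernelDeriv₂, ← integral_const_mul]
    simp [mul_assoc]
  | succ n ih =>
    intro t (ht : 0 < t)
    rw [iteratedDeriv_succ]
    have heq : (iteratedDeriv n fun t =>
        c * (t ^ 2 * ∫ x in Ioi 0, Real.exp (-t * x) * g x)) =ᶠ[𝓝 t]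
        fun t => c * ((-1) ^ n * (t ^ 2 * (∫ x in Ioi 0, gammaKernel n t x * g x) -
          2 * n * t * (∫ x in Ioi 0, gammaKernel (n - 1) t x * g x) +
          n * (n - 1) * (∫ x in Ioi 0, gammaKernel (n - 2) t x * g x))) := by
      filter_upwards [Ioi_mem_nhds ht] with s hs
      refine (ih hs).trans ?_
      simp only [integral_gammaKernelDeriv₂_mul_eq hg hpos hint n hs]
    rw [heq.deriv_eq]
    have h0 := hasDerivAt_integral_gammaKernel_mul hg hpos hint n ht
    have h1 := hasDerivAt_integral_gammaKernel_mul hg hpos hint (n - 1) ht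
    have h2 := hasDerivAt_integral_gammaKernel_mul hg hpos hint (n - 2) ht
    have hD := (((((hasDerivAt_pow 2 t).mul h0).sub
      (((hasDerivAt_id t).const_mul (2 * (n : ℝ))).mul h1)).add
      (h2.const_mul ((n : ℝ) * (n - 1)))).const_mul ((-1) ^ n)).const_mul c
    refine hD.deriv.trans ?_
    simp only [integral_gammaKernelDeriv₂_mul_eq hg hpos hint (n + 1) ht]
    rcases n with _ | _ | n <;> simp [-mul_eq_mul_left_iff] <;> ring

/-- The second-order Laplace transform criterion: `c t² ∫ e^{-tx} g(x) dx` is Bernstein exactly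
when the density `g` is concave. -/
lemma isBernsteinFn_sq_mul_integral_exp_mul_iff (hg2 : ContDiffOn ℝ 2 g (Ioi 0))
    (hmono : MonotoneOn g (Ioi 0)) {c : ℝ} (hc : 0 < c) :
    IsBernsteinFn (fun t => c * (t ^ 2 * ∫ x in Ioi 0, Real.exp (-t * x) * g x)) ↔
      ConcaveOn ℝ (Ioi 0) g := by
  have hsign : ∀ (n : ℕ), 1 ≤ n → ∀ t, 0 < t →
      (-1 : ℝ) ^ (n - 1) * iteratedDeriv n
        (fun t => c * (t ^ 2 * ∫ x in Ioi 0, Real.exp (-t * x) * g x)) t =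
      -(c * ∫ x in Ioi 0, gammaKernelDeriv₂ n t x * g x) := by
    intro n hn t ht
    rw [iteratedDeriv_sq_mul_integral_exp_mul hg hpos hint c n ht]
    obtain ⟨k, rfl⟩ : ∃ k, n = k + 1 := ⟨n - 1, by omega⟩
    have hone : ((-1 : ℝ) ^ k) * (-1) ^ k = 1 := by rw [← mul_pow]; simp
    rw [Nat.add_sub_cancel, pow_succ]
    linear_combination (-c * ∫ x in Ioi 0, gammaKernelDeriv₂ (k + 1) t x * g x) * hone
  constructor
  · rintro ⟨-, -, hder⟩
    refine concaveOn_of_integral_gammaKernelDeriv₂_mul_nonpos hg2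
      (fun n t ht => integrableOn_gammaKernel_mul hg hpos hint n ht)
      (fun n t ht => integrableOn_gammaKernelDeriv₂_mul hg hpos hint n ht) fun n t hn ht => ?_
    have h := hder n hn t ht
    rw [hsign n hn t ht] at h
    by_contra! hlt
    linarith [mul_pos hc hlt]
  · intro hconc
    refine ⟨fun t ht => ?_, ?_, fun n hn t ht => ?_⟩
    · have : 0 ≤ ∫ x in Ioi 0, Real.exp (-t * x) * g x :=
        setIntegral_nonneg measurableSet_Ioi fun x hx =>
          mul_nonneg (Real.exp_pos _).le (hpos x hx)
      positivity
    · exact contDiffOn_const.mul ((contDiffOn_id.pow 2).mul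
        (contDiffOn_integral_exp_mul hg hpos hint))
    · rw [hsign n hn t ht]
      have := mul_nonpos_of_nonneg_of_nonpos hc.le (integral_gammaKernelDeriv₂_mul_nonpos hg2 hpos
        hmono hconc hn ht (integrableOn_gammaKernelDeriv₂_mul hg hpos hint n ht))
      linarith

end Laplace

lemma isBernsteinFn_congr {f₁ f₂ : ℝ → ℝ} (h : EqOn f₁ f₂ (Ioi 0)) :
    IsBernsteinFn f₁ ↔ IsBernsteinFn f₂ := by
  have hder : ∀ n x, 0 < x → iteratedDeriv n f₁ x = iteratedDeriv n f₂ x := fun n x hx =>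
    (eventuallyEq_of_mem (Ioi_mem_nhds hx) h).iteratedDeriv_eq n
  unfold IsBernsteinFn
  refine and_congr ?_ (and_congr (contDiffOn_congr h) ?_)
  · exact forall₂_congr fun x hx => by rw [h hx]
  · exact forall₄_congr fun n _ x hx => by rw [hder n x hx]

section BernsteinInverse

variable {φ Ψ : ℝ → ℝ}

lemma IsBernsteinFn.differentiableAt (hφ : IsBernsteinFn φ) {x : ℝ} (hx : 0 < x) :
    DifferentiableAt ℝ φ x :=
  (hφ.2.1.differentiableOn (by simp)).differentiableAt (Ioi_mem_nhds hx)

lemma IsBernsteinFn.antitoneOn_deriv (hφ : IsBernsteinFn φ) : AntitoneOn (deriv φ) (Ioi 0) := by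
  have hd : ContDiffOn ℝ (⊤ : ℕ∞) (deriv φ) (Ioi 0) :=
    hφ.2.1.deriv_of_isOpen isOpen_Ioi (by simp)
  refine antitoneOn_of_deriv_nonpos (convex_Ioi 0) hd.continuousOn
    (by rw [interior_Ioi]; exact hd.differentiableOn (by simp)) fun x hx => ?_
  rw [interior_Ioi] at hx
  have h := hφ.2.2 2 (by norm_num) x hx
  simp only [iteratedDeriv_succ, iteratedDeriv_zero] at h
  norm_num at h
  exact h

lemma IsBernsteinFn.deriv_pos (hφ : IsBernsteinFn φ) (hinf : Tendsto φ atTop atTop) {x : ℝ}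
    (hx : 0 < x) : 0 < deriv φ x := by
  have hnn : ∀ y, 0 < y → 0 ≤ deriv φ y := fun y hy => by
    simpa using hφ.2.2 1 le_rfl y hy
  refine (hnn x hx).lt_of_ne' fun hzero => ?_
  obtain ⟨y, hxy, hlt⟩ := ((eventually_gt_atTop x).and
    (hinf.eventually_gt_atTop (φ x))).exists
  obtain ⟨z, hz, hzeq⟩ := exists_deriv_eq_slope φ hxy
    (fun w hw => (hφ.differentiableAt (hx.trans_le hw.1)).continuousAt.continuousWithinAt)
    (fun w hw => (hφ.differentiableAt (hx.trans hw.1)).differentiableWithinAt)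
  have hle : deriv φ z ≤ 0 := hzero ▸ hφ.antitoneOn_deriv hx (hx.trans hz.1) hz.1.le
  rw [hzeq] at hle
  exact absurd hle (not_le.2 (div_pos (sub_pos.2 hlt) (sub_pos.2 hxy)))

lemma IsBernsteinFn.strictMonoOn (hφ : IsBernsteinFn φ) (hinf : Tendsto φ atTop atTop)
    (hcont : ContinuousOn φ (Ici 0)) : StrictMonoOn φ (Ici 0) :=
  strictMonoOn_of_deriv_pos (convex_Ici 0) hcont fun x hx =>
    hφ.deriv_pos hinf (by rwa [interior_Ici] at hx)

lemma bijOn_Ioi_of_invOn (hφ : IsBernsteinFn φ) (h0 : φ 0 = 0) (hinf : Tendsto φ atTop atTop)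
    (hcont : ContinuousOn φ (Ici 0)) (hinv : InvOn Ψ φ (Ici 0) (Ici 0)) :
    BijOn Ψ (Ioi 0) (Ioi 0) := by
  have hpos : MapsTo φ (Ioi 0) (Ioi 0) := fun x hx => by
    have := hφ.strictMonoOn hinf hcont self_mem_Ici (mem_Ioi.1 hx).le hx
    rwa [h0] at this
  have hmaps : MapsTo Ψ (Ioi 0) (Ioi 0) := by
    intro y (hy : 0 < y)
    obtain ⟨R, hR0, hR⟩ := ((eventually_ge_atTop 0).and (hinf.eventually_ge_atTop y)).exists
    obtain ⟨x, hx, hxy⟩ := intermediate_value_Icc hR0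
      (hcont.mono Icc_subset_Ici_self) ⟨by rw [h0]; exact hy.le, hR⟩
    rw [← hxy, hinv.1 hx.1]
    refine lt_of_le_of_ne hx.1 fun h => ?_
    rw [← h, h0] at hxy
    exact hy.ne hxy
  exact BijOn.mk hmaps (hinv.2.mono Ioi_subset_Ici_self).injOn
    ((hinv.1.mono Ioi_subset_Ici_self).surjOn hpos)

variable (hφ : IsBernsteinFn φ) (h0 : φ 0 = 0) (hinf : Tendsto φ atTop atTop)
  (hcont : ContinuousOn φ (Ici 0)) (hinv : InvOn Ψ φ (Ici 0) (Ici 0))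

include hφ h0 hinf hcont hinv

lemma inverse_pos {y : ℝ} (hy : 0 < y) : 0 < Ψ y :=
  (bijOn_Ioi_of_invOn hφ h0 hinf hcont hinv).mapsTo hy

lemma monotoneOn_inverse : MonotoneOn Ψ (Ioi 0) := by
  intro x (hx : 0 < x) y (hy : 0 < y) hxy
  by_contra! hlt
  have := hφ.strictMonoOn hinf hcont (inverse_pos hφ h0 hinf hcont hinv hy).le
    (inverse_pos hφ h0 hinf hcont hinv hx).le hlt
  rw [hinv.2 hx.le, hinv.2 hy.le] at this
  linarith

lemma continuousAt_inverse {y : ℝ} (hy : 0 < y) : ContinuousAt Ψ y := by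
  refine continuousAt_of_monotoneOn_of_image_mem_nhds
    (monotoneOn_inverse hφ h0 hinf hcont hinv) (Ioi_mem_nhds hy) ?_
  rw [(bijOn_Ioi_of_invOn hφ h0 hinf hcont hinv).image_eq]
  exact Ioi_mem_nhds (inverse_pos hφ h0 hinf hcont hinv hy)

lemma contDiffAt_inverse_and_hasDerivAt {y : ℝ} (hy : 0 < y) :
    ContDiffAt ℝ (⊤ : ℕ∞) Ψ y ∧ HasDerivAt Ψ (deriv φ (Ψ y))⁻¹ y := by
  have hx := inverse_pos hφ h0 hinf hcont hinv hy
  have hne : deriv φ (Ψ y) ≠ 0 := (hφ.deriv_pos hinf hx).ne'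
  have hsm : ContDiffAt ℝ (⊤ : ℕ∞) φ (Ψ y) := hφ.2.1.contDiffAt (Ioi_mem_nhds hx)
  have hbij := bijOn_Ioi_of_invOn hφ h0 hinf hcont hinv
  have hΨc : ContinuousAt Ψ y := continuousAt_inverse hφ h0 hinf hcont hinv hy
  have hloc : ∀ᶠ z in 𝓝 y, φ (Ψ z) = z := by
    filter_upwards [Ioi_mem_nhds hy] with z hz
    exact hinv.2 (mem_Ioi.1 hz).le
  refine ⟨?_, (hφ.differentiableAt hx).hasDerivAt.of_local_left_inverse hΨc hne hloc⟩
  let e : OpenPartialHomeomorph ℝ ℝ :=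
    { toFun := φ
      invFun := Ψ
      source := Ioi 0
      target := Ioi 0
      map_source' := fun x hx => by
        obtain ⟨z, hz, rfl⟩ := hbij.surjOn hx
        rw [hinv.2 (mem_Ioi.1 hz).le]
        exact hz
      map_target' := hbij.mapsTo
      left_inv' := fun x hx => hinv.1 (mem_Ioi.1 hx).le
      right_inv' := fun x hx => hinv.2 (mem_Ioi.1 hx).le
      open_source := isOpen_Ioi
      open_target := isOpen_Ioi
      continuousOn_toFun := hcont.mono Ioi_subset_Ici_self
      continuousOn_invFun := fun z hz =>
        (continuousAt_inverse hφ h0 hinf hcont hinv hz).continuousWithinAt }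
  exact e.contDiffAt_symm_deriv (f₀' := deriv φ (Ψ y)) hne hy
    (hφ.differentiableAt hx).hasDerivAt hsm

variable {p : ℝ} (hp : 1 ≤ p)

lemma hasDerivAt_inverse_rpow {y : ℝ} (hy : 0 < y) :
    HasDerivAt (fun y => Ψ y ^ p) (p * ((deriv φ (Ψ y))⁻¹ * Ψ y ^ (p - 1))) y := by
  refine ((contDiffAt_inverse_and_hasDerivAt hφ h0 hinf hcont hinv hy).2.rpow_const
    (Or.inl (inverse_pos hφ h0 hinf hcont hinv hy).ne')).congr_deriv ?_
  ring

lemma contDiffOn_deriv_inverse_rpow :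
    ContDiffOn ℝ 2 (deriv fun y => Ψ y ^ p) (Ioi 0) := by
  have h : ContDiffOn ℝ (⊤ : ℕ∞) (fun y => Ψ y ^ p) (Ioi 0) := fun y hy =>
    ((contDiffAt_inverse_and_hasDerivAt hφ h0 hinf hcont hinv hy).1.rpow_const_of_ne
      (inverse_pos hφ h0 hinf hcont hinv hy).ne').contDiffWithinAt
  exact h.deriv_of_isOpen isOpen_Ioi (WithTop.coe_le_coe.2 (le_top : (2 + 1 : ℕ∞) ≤ ⊤))

include hp

lemma deriv_inverse_rpow_nonneg {y : ℝ} (hy : 0 < y) : 0 ≤ deriv (fun y => Ψ y ^ p) y := by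
  rw [(hasDerivAt_inverse_rpow hφ h0 hinf hcont hinv hy).deriv]
  have hx := inverse_pos hφ h0 hinf hcont hinv hy
  have := hφ.deriv_pos hinf hx
  positivity

lemma monotoneOn_deriv_inverse_rpow : MonotoneOn (deriv fun y => Ψ y ^ p) (Ioi 0) := by
  intro x (hx : 0 < x) y (hy : 0 < y) hxy
  rw [(hasDerivAt_inverse_rpow hφ h0 hinf hcont hinv hx).deriv,
    (hasDerivAt_inverse_rpow hφ h0 hinf hcont hinv hy).deriv]
  have hx' := inverse_pos hφ h0 hinf hcont hinv hx
  have hy' := inverse_pos hφ h0 hinf hcont hinv hy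
  have hle := monotoneOn_inverse hφ h0 hinf hcont hinv hx hy hxy
  have hdy := hφ.deriv_pos hinf hy'
  have hinvle := inv_anti₀ hdy (hφ.antitoneOn_deriv hx' hy' hle)
  have hpow := Real.rpow_le_rpow hx'.le hle (sub_nonneg.2 hp)
  gcongr

lemma integrableOn_exp_mul_deriv_inverse_rpow
    (hint : ∀ t : ℝ, 0 < t → IntegrableOn (fun x => Real.exp (-t * x) * Ψ x ^ p) (Ioi 1))
    {t : ℝ} (ht : 0 < t) :
    IntegrableOn (fun x => Real.exp (-t * x) * deriv (fun y => Ψ y ^ p) x) (Ioi 0) := by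
  have hshift : IntegrableOn (fun x => Real.exp (-t * (x + 1)) * Ψ (x + 1) ^ p) (Ioi 0) := by
    have h := (measurePreserving_add_right volume (1 : ℝ)).integrableOn_comp_preimage
      (measurableEmbedding_addRight (1 : ℝ)) (f := fun x => Real.exp (-t * x) * Ψ x ^ p)
      (s := Ioi 1)
    have hpre : (fun x : ℝ => x + 1) ⁻¹' Ioi 1 = Ioi 0 := by ext x; simp
    rw [hpre] at h
    exact h.2 (hint t ht)
  refine (hshift.const_mul (Real.exp t)).mono' ?_ ?_
  · refine ContinuousOn.aestronglyMeasurable ?_ measurableSet_Ioi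
    exact (by fun_prop : Continuous fun x => Real.exp (-t * x)).continuousOn.mul
      (contDiffOn_deriv_inverse_rpow hφ h0 hinf hcont hinv).continuousOn
  · refine (ae_restrict_iff' measurableSet_Ioi).2 (Eventually.of_forall fun x (hx : 0 < x) => ?_)
    have hnn := deriv_inverse_rpow_nonneg hφ h0 hinf hcont hinv hp hx
    rw [Real.norm_of_nonneg (mul_nonneg (Real.exp_pos _).le hnn), ← mul_assoc, ← Real.exp_add,
      show t + -t * (x + 1) = -t * x by ring]
    refine mul_le_mul_of_nonneg_left ?_ (Real.exp_pos _).le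
    obtain ⟨z, hz, hzeq⟩ := exists_deriv_eq_slope (fun y => Ψ y ^ p) (lt_add_one x)
      (fun w hw => (hasDerivAt_inverse_rpow hφ h0 hinf hcont hinv
        (hx.trans_le hw.1)).continuousAt.continuousWithinAt)
      (fun w hw => (hasDerivAt_inverse_rpow hφ h0 hinf hcont hinv
        (hx.trans hw.1)).differentiableAt.differentiableWithinAt)
    have hle := monotoneOn_deriv_inverse_rpow hφ h0 hinf hcont hinv hp hx (hx.trans hz.1) hz.1.le
    rw [hzeq, add_sub_cancel_left, div_one] at hle
    have := Real.rpow_nonneg (inverse_pos hφ h0 hinf hcont hinv hx).le p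
    linarith

/-- Substituting `l = Ψ y` in the Mellin-type integral of `exp (-t φ)`. -/
lemma lintegral_rpow_mul_exp_eq (t : ℝ) :
    ∫⁻ l in Ioi 0, ENNReal.ofReal (l ^ (p - 1) * Real.exp (-t * φ l)) =
      ∫⁻ y in Ioi 0, ENNReal.ofReal (p⁻¹ * (Real.exp (-t * y) * deriv (fun y => Ψ y ^ p) y)) := by
  have hbij := bijOn_Ioi_of_invOn hφ h0 hinf hcont hinv
  have h := lintegral_image_eq_lintegral_abs_deriv_mul measurableSet_Ioi
    (fun y hy => (contDiffAt_inverse_and_hasDerivAt hφ h0 hinf hcont hinv hy).2.hasDerivWithinAt)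
    hbij.injOn (fun l => ENNReal.ofReal (l ^ (p - 1) * Real.exp (-t * φ l)))
  rw [hbij.image_eq] at h
  rw [h]
  refine setLIntegral_congr_fun measurableSet_Ioi fun y (hy : 0 < y) => ?_
  have hd := hφ.deriv_pos hinf (inverse_pos hφ h0 hinf hcont hinv hy)
  have hp0 : p ≠ 0 := by linarith
  rw [← ENNReal.ofReal_mul (abs_nonneg _), hinv.2 hy.le, abs_of_pos (inv_pos.2 hd),
    (hasDerivAt_inverse_rpow hφ h0 hinf hcont hinv hy).deriv]
  congr 1
  field_simp

end BernsteinInverse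

lemma ae_pos_of_measure_Iic_zero {μ : Measure ℝ} (hsupp : μ {x | x ≤ 0} = 0) :
    ∀ᵐ x ∂μ, 0 < x := by
  simpa [ae_iff] using hsupp

lemma integrable_exp_neg_mul {μ : Measure ℝ} [IsProbabilityMeasure μ]
    (hsupp : μ {x | x ≤ 0} = 0) {l : ℝ} (hl : 0 ≤ l) :
    Integrable (fun x => Real.exp (-l * x)) μ := by
  refine Integrable.mono' (integrable_const (1 : ℝ))
    (by fun_prop : Continuous fun x => Real.exp (-l * x)).aestronglyMeasurable ?_
  filter_upwards [ae_pos_of_measure_Iic_zero hsupp] with x hx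
  rw [Real.norm_of_nonneg (Real.exp_pos _).le]
  exact Real.exp_le_one_iff.2 (by nlinarith)

lemma continuousOn_laplaceExponent {φ : ℝ → ℝ} {μ : Measure ℝ} [IsProbabilityMeasure μ]
    (hsupp : μ {x | x ≤ 0} = 0)
    (hlaplace : ∀ l : ℝ, 0 ≤ l → ∫ x, Real.exp (-l * x) ∂μ = Real.exp (-1 * φ l)) :
    ContinuousOn φ (Ici 0) := by
  have hL : ContinuousOn (fun l => ∫ x, Real.exp (-l * x) ∂μ) (Ici 0) := by
    refine continuousOn_of_dominated (bound := fun _ => 1)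
      (fun l hl => (integrable_exp_neg_mul hsupp hl).aestronglyMeasurable) (fun l hl => ?_)
      (integrable_const _) (Eventually.of_forall fun x => by fun_prop)
    filter_upwards [ae_pos_of_measure_Iic_zero hsupp] with x hx
    rw [Real.norm_of_nonneg (Real.exp_pos _).le]
    exact Real.exp_le_one_iff.2 (by nlinarith [mem_Ici.1 hl])
  have hlog := (hL.log fun l hl => by rw [hlaplace l hl]; exact (Real.exp_pos _).ne').neg
  refine hlog.congr fun l hl => ?_
  rw [Pi.neg_apply, hlaplace l hl, Real.log_exp]
  ring

/-- Negative moments in terms of the Laplace transform. -/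
lemma lintegral_rpow_neg_eq {μ : Measure ℝ} [IsProbabilityMeasure μ]
    (hsupp : μ {x | x ≤ 0} = 0) {h : ℝ → ℝ}
    (hlaplace : ∀ l : ℝ, 0 ≤ l → ∫ x, Real.exp (-l * x) ∂μ = h l) {p : ℝ} (hp : 0 < p) :
    ∫⁻ x, ENNReal.ofReal (x ^ (-p)) ∂μ = ENNReal.ofReal (Real.Gamma p)⁻¹ *
      ∫⁻ l in Ioi 0, ENNReal.ofReal (l ^ (p - 1) * h l) := by
  have hΓ := Real.Gamma_pos_of_pos hp
  have hker : ∀ᵐ x ∂μ, ENNReal.ofReal (x ^ (-p)) = ENNReal.ofReal (Real.Gamma p)⁻¹ *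
      ∫⁻ l in Ioi 0, ENNReal.ofReal (l ^ (p - 1) * Real.exp (-l * x)) := by
    filter_upwards [ae_pos_of_measure_Iic_zero hsupp] with x hx
    have hI : ∫ l in Ioi 0, l ^ (p - 1) * Real.exp (-l * x) = x ^ (-p) * Real.Gamma p := by
      rw [Real.rpow_neg hx.le, ← Real.inv_rpow hx.le, ← one_div,
        ← Real.integral_rpow_mul_exp_neg_mul_Ioi hp hx]
      refine setIntegral_congr_fun measurableSet_Ioi fun l _ => ?_
      ring_nf
    have hne : ∫ l in Ioi 0, l ^ (p - 1) * Real.exp (-l * x) ≠ 0 := by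
      rw [hI]; positivity
    rw [← ofReal_integral_eq_lintegral_ofReal (Integrable.of_integral_ne_zero hne), hI,
      ← ENNReal.ofReal_mul (by positivity)]
    · congr 1
      field_simp
    · refine (ae_restrict_iff' measurableSet_Ioi).2 (Eventually.of_forall fun l hl => ?_)
      exact mul_nonneg (Real.rpow_nonneg (le_of_lt hl) _) (Real.exp_pos _).le
  rw [lintegral_congr_ae hker, lintegral_const_mul' _ _ ENNReal.ofReal_ne_top,
    lintegral_lintegral_swap (by fun_prop)]
  congr 1
  refine setLIntegral_congr_fun measurableSet_Ioi fun l (hl : 0 < l) => ?_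
  have hl' : 0 ≤ l ^ (p - 1) := Real.rpow_nonneg hl.le _
  rw [← hlaplace l hl.le, ← integral_const_mul, ofReal_integral_eq_lintegral_ofReal
    ((integrable_exp_neg_mul hsupp hl.le).const_mul _)]
  exact Eventually.of_forall fun x => mul_nonneg hl' (Real.exp_pos _).le

/-- Let `φ` be a non-affine Bernstein function with `φ(0) = 0`, `φ(∞) = ∞`,
inverse `Ψ`, marginal subordinator laws `(μ_t)_{t>0}`, let `p ≥ 1`, and assume
`x ↦ e^{−tx} Ψ(x)^p` is integrable near `∞` for all `t > 0`. Then `t ↦ t²·E[ξ_t^{−p}]` is a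
Bernstein function if, and only if, `(Ψ^p)'` is concave on `(0,∞)`. -/
theorem stmt_8 (φ Ψ : ℝ → ℝ) (hφ : IsBernsteinFn φ)
    (hnonaffine : ¬∃ c d : ℝ, ∀ x : ℝ, 0 ≤ x → φ x = c + d * x)
    (h0 : φ 0 = 0) (hinf : Tendsto φ atTop atTop) (hinv : Set.InvOn Ψ φ (Ici 0) (Ici 0))
    (μ : ℝ → Measure ℝ) (hprob : ∀ t : ℝ, 0 < t → IsProbabilityMeasure (μ t))
    (hsupp : ∀ t : ℝ, 0 < t → μ t {x | x ≤ 0} = 0)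
    (hlaplace : ∀ t : ℝ, 0 < t → ∀ l : ℝ, 0 ≤ l →
      ∫ x, Real.exp (-l * x) ∂(μ t) = Real.exp (-t * φ l))
    (p : ℝ) (hp : 1 ≤ p)
    (hint : ∀ t : ℝ, 0 < t → IntegrableOn (fun x => Real.exp (-t * x) * Ψ x ^ p) (Ioi 1)) :
    IsBernsteinFn (fun t => t ^ 2 * (∫⁻ x, ENNReal.ofReal (x ^ (-p)) ∂(μ t)).toReal) ↔
      ConcaveOn ℝ (Ioi 0) (deriv (fun y => Ψ y ^ p)) := by
  have hp0 : 0 < p := one_pos.trans_le hp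
  have hcont : ContinuousOn φ (Ici 0) := by
    have := hprob 1 one_pos
    exact continuousOn_laplaceExponent (hsupp 1 one_pos) (hlaplace 1 one_pos)
  have hΓ := Real.Gamma_pos_of_pos hp0
  have hC2 := contDiffOn_deriv_inverse_rpow hφ h0 hinf hcont hinv (p := p)
  have hnn : ∀ x, 0 < x → 0 ≤ deriv (fun y => Ψ y ^ p) x := fun x hx =>
    deriv_inverse_rpow_nonneg hφ h0 hinf hcont hinv hp hx
  have hI : ∀ t : ℝ, 0 < t → IntegrableOn (fun x => Real.exp (-t * x) *
      deriv (fun y => Ψ y ^ p) x) (Ioi 0) := fun t ht =>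
    integrableOn_exp_mul_deriv_inverse_rpow hφ h0 hinf hcont hinv hp hint ht
  rw [← isBernsteinFn_sq_mul_integral_exp_mul_iff hC2.continuousOn hnn hI hC2
    (monotoneOn_deriv_inverse_rpow hφ h0 hinf hcont hinv hp)
    (by positivity : 0 < (Real.Gamma p)⁻¹ * p⁻¹)]
  refine isBernsteinFn_congr fun t (ht : 0 < t) => ?_
  have := hprob t ht
  rw [lintegral_rpow_neg_eq (hsupp t ht) (hlaplace t ht) hp0,
    lintegral_rpow_mul_exp_eq hφ h0 hinf hcont hinv hp,
    ← ofReal_integral_eq_lintegral_ofReal ((hI t ht).const_mul _), ← ENNReal.ofReal_mul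
    (by positivity), integral_const_mul, ENNReal.toReal_ofReal]
  · ring
  · have : 0 ≤ ∫ x in Ioi 0, Real.exp (-t * x) * deriv (fun y => Ψ y ^ p) x :=
      setIntegral_nonneg measurableSet_Ioi fun x hx => mul_nonneg (Real.exp_pos _).le (hnn x hx)
    positivity
  · refine (ae_restrict_iff' measurableSet_Ioi).2 (Eventually.of_forall fun x hx => ?_)
    exact mul_nonneg (by positivity) (mul_nonneg (Real.exp_pos _).le (hnn x hx))
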